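/- When the meta-algorithm is run with Commit procedure CommitKnown (corruption budget C known), the number of Commit failures on the correct leaf satisfies N_T ≤ C: the commit procedure exits the correct leaf ℓ* only if at least one of the two endpoint queries in the failing iteration is corrupted. -/

import Mathlib

/-!
A Commit call leaves the correct leaf `ℓ* = [L, R)` only in a round that queries `R`, right after a
round that queried `L` on the same leaf, and only if the observed bits satisfy `σ_L = 0` or
`σ_R = 1`. Since `L ≤ v < R` (`nodeL_lstar_le`, `lt_nodeR_lstar`), one of these two rounds is
corrupted (`corrupted_of_fail`). Send each failing round `t` to a corrupted round among `t`, `t - 1`.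
Two failing rounds are never adjacent, because the node after a failure is not `ℓ*`; hence this map
is injective, and the number of failures is at most the number of corruptions, which is at most `C`.
-/

namespace RobustPricing

/-- Phase of the current search step: first endpoint query, second endpoint query,
or midpoint query. -/
inductive Ph | checkL | checkR | mid
deriving DecidableEq

/-- Parent of a node `(d, k)` (representing the dyadic interval `[k/2^d, (k+1)/2^d)`). -/
def parent (p : ℕ × ℕ) : ℕ × ℕ := (p.1 - 1, p.2 / 2)

/-- Left child of a dyadic node. -/
def leftChild (p : ℕ × ℕ) : ℕ × ℕ := (p.1 + 1, 2 * p.2)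

/-- Right child of a dyadic node. -/
def rightChild (p : ℕ × ℕ) : ℕ × ℕ := (p.1 + 1, 2 * p.2 + 1)

/-- Left endpoint `L` of the dyadic interval of a node. -/
noncomputable def nodeL (p : ℕ × ℕ) : ℝ := (p.2 : ℝ) / 2 ^ p.1

/-- Right endpoint `R` of the dyadic interval of a node. -/
noncomputable def nodeR (p : ℕ × ℕ) : ℝ := ((p.2 : ℝ) + 1) / 2 ^ p.1

/-- Midpoint `M = (L+R)/2` of the dyadic interval of a node. -/
noncomputable def nodeM (p : ℕ × ℕ) : ℝ := (2 * (p.2 : ℝ) + 1) / 2 ^ (p.1 + 1)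

/-- The leaf `ℓ* = (D, ⌊v·2^D⌋)` at depth `D` containing the valuation `v`. -/
noncomputable def lstar (v : ℝ) (D : ℕ) : ℕ × ℕ := (D, ⌊v * 2 ^ D⌋₊)

/-- State of the meta-algorithm (Algorithm 1) instantiated with the `CommitKnown`
procedure: current node `nd` of the dyadic tree, phase `ph` within the current search
step, the feedback `sL` observed at the left endpoint in the current safety check, and
the global (never reset) per-leaf counters `ctr` of `CommitKnown`. -/
structure St where
  nd : ℕ × ℕ
  ph : Ph
  sL : Bool
  ctr : ℕ → ℕ

/-- Initial state: the root interval `[0,1)`. -/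
def initSt : St := ⟨(0, 0), Ph.checkL, true, fun _ => 0⟩

/-- Price posted by the meta-algorithm with `CommitKnown` (depth of leaves `D`, known
corruption budget `C`).  At a non-leaf node the safety check posts `L` then `R`, and then
the midpoint `M` is posted; at a leaf `ℓ = [L,R)`, while `s_ℓ ≤ C` the procedure posts `L`
then `R`, and once `s_ℓ > C` it posts `L` in every round. -/
noncomputable def price (D C : ℕ) (s : St) : ℝ :=
  if s.nd.1 = D then
    if s.ctr s.nd.2 ≤ C ∧ s.ph = Ph.checkR then nodeR s.nd else nodeL s.nd
  else
    match s.ph with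
    | Ph.checkL => nodeL s.nd
    | Ph.checkR => nodeR s.nd
    | Ph.mid => nodeM s.nd

/-- One-round transition of the meta-algorithm with `CommitKnown`, given the observed
feedback `b` for the posted price.  At a non-leaf node: if the safety check fails
(`σ_L = 0` or `σ_R = 1`) backtrack to the parent, otherwise query the midpoint and descend
to `[M,R)` on `σ_M = 1` and to `[L,M)` on `σ_M = 0`.  At a leaf `ℓ`: while `s_ℓ ≤ C`, post
`L` then `R`, return FAIL (backtrack to the parent) if `σ_L = 0` or `σ_R = 1` and
otherwise increment `s_ℓ`; once `s_ℓ > C`, commit to posting `L`. -/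
def step (D C : ℕ) (s : St) (b : Bool) : St :=
  if s.nd.1 = D then
    if s.ctr s.nd.2 ≤ C then
      match s.ph with
      | Ph.checkL => ⟨s.nd, Ph.checkR, b, s.ctr⟩
      | _ =>
        if s.sL = false ∨ b = true then ⟨parent s.nd, Ph.checkL, true, s.ctr⟩
        else ⟨s.nd, Ph.checkL, true, Function.update s.ctr s.nd.2 (s.ctr s.nd.2 + 1)⟩
    else s
  else
    match s.ph with
    | Ph.checkL => ⟨s.nd, Ph.checkR, b, s.ctr⟩
    | Ph.checkR =>
      if s.sL = false ∨ b = true then ⟨parent s.nd, Ph.checkL, true, s.ctr⟩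
      else ⟨s.nd, Ph.mid, s.sL, s.ctr⟩
    | Ph.mid => ⟨(if b then rightChild s.nd else leftChild s.nd), Ph.checkL, true, s.ctr⟩

/-- State trajectory of the meta-algorithm with `CommitKnown` under the observed feedback
sequence `obs` (the bit `obs t` is the feedback the seller observes at round `t`). -/
def traj (D C : ℕ) (obs : ℕ → Bool) : ℕ → St
  | 0 => initSt
  | t + 1 => step D C (traj D C obs t) (obs t)

/-- Price posted at round `t`. -/
noncomputable def priceAt (D C : ℕ) (obs : ℕ → Bool) (t : ℕ) : ℝ :=
  price D C (traj D C obs t)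

/-- Number of corrupted rounds among the first `T` rounds: rounds where the observed
feedback differs from the truthful feedback `1{p_t ≤ v}`. -/
noncomputable def corruptions (v : ℝ) (D C T : ℕ) (obs : ℕ → Bool) : ℕ :=
  ((Finset.range T).filter fun t => obs t ≠ decide (priceAt D C obs t ≤ v)).card

/-- `N_T`: number of Commit calls returning FAIL (backtracking) on the correct leaf `ℓ*`
during the first `T` rounds. -/
noncomputable def NT (v : ℝ) (D C T : ℕ) (obs : ℕ → Bool) : ℕ :=
  ((Finset.range T).filter fun t =>
      (traj D C obs t).nd = lstar v D ∧ (traj D C obs (t + 1)).nd ≠ lstar v D).card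

/-- `N_F`: number of Commit calls returning FAIL (backtracking) on incorrect leaves
during the first `T` rounds. -/
noncomputable def NF (v : ℝ) (D C T : ℕ) (obs : ℕ → Bool) : ℕ :=
  ((Finset.range T).filter fun t =>
      (traj D C obs t).nd.1 = D ∧ (traj D C obs t).nd ≠ lstar v D ∧
        (traj D C obs (t + 1)).nd ≠ (traj D C obs t).nd).card

/-- `R(ℓ)`: regret accumulated over the rounds `Q(ℓ)` in which the algorithm runs the
Commit subroutine on the leaf `ℓ`, i.e. `Σ_{t ∈ Q(ℓ)} (v − p_t·1{p_t ≤ v})`. -/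
noncomputable def Rleaf (v : ℝ) (D C T : ℕ) (obs : ℕ → Bool) (l : ℕ × ℕ) : ℝ :=
  ∑ t ∈ (Finset.range T).filter (fun t => (traj D C obs t).nd = l),
    (v - priceAt D C obs t * (if priceAt D C obs t ≤ v then 1 else 0))

/-- Cumulative regret over the horizon `T`: `R_T = T·v − Σ_{t<T} p_t·1{p_t ≤ v}`. -/
noncomputable def regret (v : ℝ) (D C T : ℕ) (obs : ℕ → Bool) : ℝ :=
  (T : ℝ) * v - ∑ t ∈ Finset.range T,
    priceAt D C obs t * (if priceAt D C obs t ≤ v then 1 else 0)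

theorem nodeL_lstar_le {v : ℝ} (hv : 0 ≤ v) (D : ℕ) : nodeL (lstar v D) ≤ v := by
  unfold nodeL lstar
  rw [div_le_iff₀ (by positivity)]
  exact Nat.floor_le (by positivity)

theorem lt_nodeR_lstar (v : ℝ) (D : ℕ) : v < nodeR (lstar v D) := by
  unfold nodeR lstar
  rw [lt_div_iff₀ (by positivity)]
  exact Nat.lt_floor_add_one _

/-- The midpoint phase never occurs at a leaf. -/
theorem traj_ph_ne_mid (D C : ℕ) (obs : ℕ → Bool) (t : ℕ) (h : (traj D C obs t).nd.1 = D) :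
    (traj D C obs t).ph ≠ Ph.mid := by
  induction t with
  | zero => simp [traj, initSt]
  | succ t ih =>
    simp only [traj] at h ⊢
    generalize traj D C obs t = s at *
    unfold step at *
    grind

/-- The second endpoint query of an active check on a leaf is preceded by the first endpoint query
on the same leaf, whose observed feedback is the stored bit `sL`. -/
theorem exists_prev_of_checkR {D C : ℕ} {obs : ℕ → Bool} {t : ℕ}
    (hD : (traj D C obs t).nd.1 = D)
    (hc : (traj D C obs t).ctr (traj D C obs t).nd.2 ≤ C)
    (hph : (traj D C obs t).ph = Ph.checkR) :
    ∃ u, t = u + 1 ∧ (traj D C obs u).nd = (traj D C obs t).nd ∧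
      (traj D C obs u).ph = Ph.checkL ∧ (traj D C obs t).sL = obs u := by
  cases t with
  | zero => simp [traj, initSt] at hph
  | succ t =>
    refine ⟨t, rfl, ?_⟩
    simp only [traj] at *
    generalize traj D C obs t = s at *
    unfold step at *
    grind

/-- Leaving a leaf requires an active check (counter at most `C`) past its first query, and a
failing pair of observed bits. -/
theorem fail_step {D C : ℕ} {s : St} {b : Bool} (hD : s.nd.1 = D)
    (hne : (step D C s b).nd ≠ s.nd) :
    s.ctr s.nd.2 ≤ C ∧ s.ph ≠ Ph.checkL ∧ (s.sL = false ∨ b = true) := by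
  unfold step at hne
  grind

/-- A failure on the correct leaf in round `t` comes with a corrupted endpoint query, in round `t`
or in the round just before. -/
theorem corrupted_of_fail {v : ℝ} (hv : 0 ≤ v) {D C : ℕ} {obs : ℕ → Bool} {t : ℕ}
    (h : (traj D C obs t).nd = lstar v D) (h' : (traj D C obs (t + 1)).nd ≠ lstar v D) :
    ∃ u, (u = t ∨ u + 1 = t) ∧ obs u ≠ decide (priceAt D C obs u ≤ v) := by
  have hD : (traj D C obs t).nd.1 = D := by rw [h]; rfl
  obtain ⟨hc, hL, hb⟩ := fail_step (b := obs t) hD (by rw [h]; exact h')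
  have hR : (traj D C obs t).ph = Ph.checkR := by
    have hM := traj_ph_ne_mid D C obs t hD
    cases hp : (traj D C obs t).ph <;> simp_all
  rcases hb with hb | hb
  · obtain ⟨u, rfl, hnd, hphu, hs⟩ := exists_prev_of_checkR hD hc hR
    refine ⟨u, Or.inr rfl, ?_⟩
    have hp : priceAt D C obs u = nodeL (lstar v D) := by
      rw [h] at hnd
      simp [priceAt, price, hphu, hnd]
    rw [hp, ← hs, hb]
    simp [nodeL_lstar_le hv D]
  · refine ⟨t, Or.inl rfl, ?_⟩
    have hp : priceAt D C obs t = nodeR (lstar v D) := by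
      simp only [priceAt, price, hD, hc, hR, if_true, and_self]
      rw [h]
    rw [hp, hb]
    simp [lt_nodeR_lstar v D]

/-- The failures on the correct leaf inject into the corrupted rounds, for every leaf depth. -/
theorem NT_le_corruptions {v : ℝ} (hv : 0 ≤ v) (D C T : ℕ) (obs : ℕ → Bool) :
    NT v D C T obs ≤ corruptions v D C T obs := by
  classical
  have key : ∀ t, ∃ u, (traj D C obs t).nd = lstar v D ∧ (traj D C obs (t + 1)).nd ≠ lstar v D →
      (u = t ∨ u + 1 = t) ∧ obs u ≠ decide (priceAt D C obs u ≤ v) := by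
    intro t
    by_cases h : (traj D C obs t).nd = lstar v D ∧ (traj D C obs (t + 1)).nd ≠ lstar v D
    · obtain ⟨u, hu⟩ := corrupted_of_fail hv h.1 h.2
      exact ⟨u, fun _ => hu⟩
    · exact ⟨0, fun h' => absurd h' h⟩
  choose f hf using key
  unfold NT corruptions
  refine Finset.card_le_card_of_injOn f ?_ ?_
  · intro t ht
    simp only [Finset.coe_filter, Finset.mem_range, Set.mem_ofPred_eq] at ht ⊢
    obtain ⟨h1, h2⟩ := hf t ht.2
    exact ⟨by omega, h2⟩
  · intro t ht t' ht' he
    simp only [Finset.coe_filter, Finset.mem_range, Set.mem_ofPred_eq] at ht ht'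
    have h2 := (hf t' ht'.2).1
    have h1 := (hf t ht.2).1
    -- Distinct failing rounds with the same image would be adjacent.
    by_contra hne
    have hadj : t' = t + 1 ∨ t = t' + 1 := by omega
    rcases hadj with rfl | rfl
    · exact ht.2.2 ht'.2.1
    · exact ht'.2.2 ht.2.1

/-- When the meta-algorithm is run with Commit procedure `CommitKnown`
(corruption budget `C` known) over horizon `T` with leaves at depth `D = ⌈log₂ T⌉`,
valuation `v ∈ [0,1)`, and feedback corrupted in at most `C` rounds, the number of Commit
failures on the correct leaf satisfies `N_T ≤ C`. -/
theorem commitKnown_NT_le_C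
    (T C : ℕ) (v : ℝ) (hv : 0 ≤ v) (hv1 : v < 1) (obs : ℕ → Bool)
    (hC : corruptions v (Nat.clog 2 T) C T obs ≤ C) :
    NT v (Nat.clog 2 T) C T obs ≤ C := by
  exact (NT_le_corruptions hv _ C T obs).trans hC

end RobustPricing
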